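/- arXiv:1805.03566 — 2 statements merged into one kernel-verified Lean document; each statement's English description precedes it below -/
import Mathlib

section
/- Let ν be a lattice path with m east and n north steps and let T be a ν-tree. Then T contains: the top-left corner (0,n) of A_ν (called the root); every valley of ν (every lattice point of ν immediately preceded by an east step and immediately followed by a north step); the starting points of the initial north steps of ν; the ending points of the final east steps of ν; at least one point in each column of A_ν; and at least one point in each row of A_ν. Moreover, every point of T other than the root has either a point of T above it in the same column or a point of T to its left in the same row, but not both. -/
open scoped Classical

/-! Lattice paths: `true` = north step, `false` = east step. -/

def eastSteps (ν : List Bool) : ℕ := ν.count false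
def northSteps (ν : List Bool) : ℕ := ν.count true

/-- Height at which the path first reaches abscissa `x`. -/
def heightAt : List Bool → ℕ → ℕ
  | _, 0 => 0
  | [], _ + 1 => 0
  | true :: rest, x + 1 => heightAt rest (x + 1) + 1
  | false :: rest, x + 1 => heightAt rest x

/-- Lattice point of a path after `i` steps. -/
def pointAt (μ : List Bool) (i : ℕ) : ℕ × ℕ :=
  ((μ.take i).count false, (μ.take i).count true)

/-- The set `A_ν` of lattice points weakly above `ν`. -/
def APts (ν : List Bool) : Set (ℕ × ℕ) :=
  {p | p.1 ≤ eastSteps ν ∧ heightAt ν p.1 ≤ p.2 ∧ p.2 ≤ northSteps ν}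

def Incompatible (ν : List Bool) (p q : ℕ × ℕ) : Prop :=
  (p.1 < q.1 ∧ p.2 < q.2 ∧ (q.1, p.2) ∈ APts ν) ∨
    (q.1 < p.1 ∧ q.2 < p.2 ∧ (p.1, q.2) ∈ APts ν)

def Compatible (ν : List Bool) (p q : ℕ × ℕ) : Prop := ¬ Incompatible ν p q

def IsNuTree (ν : List Bool) (T : Set (ℕ × ℕ)) : Prop :=
  T ⊆ APts ν ∧ T.Pairwise (Compatible ν) ∧
    ∀ T', T' ⊆ APts ν → T'.Pairwise (Compatible ν) → T ⊆ T' → T' = T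

def IsRightRotationAt (T T' : Set (ℕ × ℕ)) (q q' : ℕ × ℕ) : Prop :=
  ∃ x y x'' y', q = (x, y) ∧ q' = (x'', y') ∧ x < x'' ∧ y < y' ∧
    (x, y) ∈ T ∧ (x, y') ∈ T ∧ (x'', y) ∈ T ∧
    (∀ b, y < b → b < y' → (x, b) ∉ T) ∧
    (∀ a, x < a → a < x'' → (a, y) ∉ T) ∧
    (∀ a, x < a → a < x'' → (a, y') ∉ T) ∧
    (∀ b, y < b → b < y' → (x'', b) ∉ T) ∧
    T' = (T \ {(x, y)}) ∪ {(x'', y')}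

def IsRightRotation (T T' : Set (ℕ × ℕ)) : Prop :=
  ∃ q q', IsRightRotationAt T T' q q'

/-- Order relation of the rotation poset of ν-trees. -/
def TreeLE (ν : List Bool) : Set (ℕ × ℕ) → Set (ℕ × ℕ) → Prop :=
  Relation.ReflTransGen fun A B => IsNuTree ν A ∧ IsNuTree ν B ∧ IsRightRotation A B

def IsNuPath (ν μ : List Bool) : Prop :=
  eastSteps μ = eastSteps ν ∧ northSteps μ = northSteps ν ∧
    ∀ i ≤ μ.length, pointAt μ i ∈ APts ν

noncomputable def horiz (ν : List Bool) (p : ℕ × ℕ) : ℕ :=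
  sSup {k | (p.1 + k, p.2) ∈ APts ν}

/-- Covering relation of the ν-Tamari lattice. -/
def TamariCover (ν μ μ' : List Bool) : Prop :=
  IsNuPath ν μ ∧ IsNuPath ν μ' ∧
    ∃ i j, 0 < i ∧ i < j ∧ j ≤ μ.length ∧
      μ.getD (i - 1) true = false ∧ μ.getD i false = true ∧
      horiz ν (pointAt μ j) = horiz ν (pointAt μ i) ∧
      (∀ k, i < k → k < j → horiz ν (pointAt μ k) ≠ horiz ν (pointAt μ i)) ∧
      μ' = μ.take (i - 1) ++ (μ.drop i).take (j - i) ++ [false] ++ μ.drop j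

def TamariLE (ν : List Bool) : List Bool → List Bool → Prop :=
  Relation.ReflTransGen (TamariCover ν)

/-! Flushing maps -/

def rowAvail (ν : List Bool) (y : ℕ) : List ℕ :=
  ((List.range (eastSteps ν + 1)).filter fun x => decide (heightAt ν x ≤ y)).reverse

def pointsAtHeight (μ : List Bool) (y : ℕ) : ℕ :=
  ((List.range (μ.length + 1)).filter fun i => decide ((μ.take i).count true = y)).length

def rflushAux (ν : List Bool) : List ℕ → ℕ → List ℕ → List (ℕ × ℕ)
  | [], _, _ => []
  | c :: rest, y, forbidden =>
    let placed := ((rowAvail ν y).filter fun x => decide (x ∉ forbidden)).take c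
    placed.map (fun x => (x, y)) ++ rflushAux ν rest (y + 1) (forbidden ++ placed.dropLast)

/-- Right-flushing map `R`. -/
def Rflush (ν μ : List Bool) : Set (ℕ × ℕ) :=
  {p | p ∈ rflushAux ν ((List.range (northSteps ν + 1)).map (pointsAtHeight μ)) 0 []}

def lflushAux (m : ℕ) : List ℕ → ℕ → List ℕ → List (ℕ × ℕ)
  | [], _, _ => []
  | c :: rest, y, forbidden =>
    let placed := ((List.range (m + 1)).filter fun x => decide (x ∉ forbidden)).take c
    placed.map (fun x => (x, y)) ++ lflushAux m rest (y + 1) (forbidden ++ placed.dropLast)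

noncomputable def rowCount (T : Set (ℕ × ℕ)) (y : ℕ) : ℕ := {x | (x, y) ∈ T}.ncard

/-- Left-flushing map `L`. -/
noncomputable def Lflush (ν : List Bool) (T : Set (ℕ × ℕ)) : Set (ℕ × ℕ) :=
  {p | p ∈ lflushAux (eastSteps ν) ((List.range (northSteps ν + 1)).map (rowCount T)) 0 []}

def pathPointSet (μ : List Bool) : Set (ℕ × ℕ) := {p | ∃ i ≤ μ.length, pointAt μ i = p}

/-! Bracket vectors (0-indexed positions `0,…,ℓ`). -/

noncomputable def fpos (ν : List Bool) (k : ℕ) : ℕ :=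
  sSup {i | i ≤ ν.length ∧ (ν.take i).count true = k}

def bmin (ν : List Bool) : List ℕ :=
  (List.range (ν.length + 1)).map fun i => (ν.take i).count true

def IsBracketVector (ν : List Bool) (b : List ℕ) : Prop :=
  b.length = ν.length + 1 ∧
    (∀ k ≤ northSteps ν, b.getD (fpos ν k) 0 = k) ∧
    (∀ i < b.length, (bmin ν).getD i 0 ≤ b.getD i 0 ∧ b.getD i 0 ≤ northSteps ν) ∧
    ∀ i j k, i < j → j < k → k < b.length →
      ¬(b.getD i 0 = b.getD k 0 ∧ b.getD i 0 < b.getD j 0)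

noncomputable def leftChild (T : Set (ℕ × ℕ)) (p : ℕ × ℕ) : Option (ℕ × ℕ) :=
  if ∃ b, (p.1, b) ∈ T ∧ b < p.2 then some (p.1, sSup {b | (p.1, b) ∈ T ∧ b < p.2})
  else none

noncomputable def rightChild (T : Set (ℕ × ℕ)) (p : ℕ × ℕ) : Option (ℕ × ℕ) :=
  if ∃ a, (a, p.2) ∈ T ∧ p.1 < a then
    if ∃ b, (sInf {a | (a, p.2) ∈ T ∧ p.1 < a}, b) ∈ T ∧ p.2 < b then none
    else some (sInf {a | (a, p.2) ∈ T ∧ p.1 < a}, p.2)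
  else none

noncomputable def inorderAux (T : Set (ℕ × ℕ)) : ℕ → ℕ × ℕ → List (ℕ × ℕ)
  | 0, _ => []
  | fuel + 1, p =>
    (match leftChild T p with
      | none => []
      | some l => inorderAux T fuel l) ++ p ::
      (match rightChild T p with
        | none => []
        | some r => inorderAux T fuel r)

/-- Bracket vector of a ν-tree: y-coordinates read in in-order from the root `(0,n)`. -/
noncomputable def bracketOfTree (ν : List Bool) (T : Set (ℕ × ℕ)) : List ℕ :=
  (inorderAux T T.ncard (0, northSteps ν)).map Prod.snd

noncomputable def bracketAssign (ν μ : List Bool) : List (ℕ × ℕ) :=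
  ((List.range (northSteps ν + 1)).foldl
    (fun (st : List (ℕ × ℕ) × List ℕ) k =>
      let picked := ((st.2.filter fun i => decide (i ≤ fpos ν k)).reverse).take
        (pointsAtHeight μ k)
      (st.1 ++ picked.map fun i => (i, k), st.2.filter fun i => decide (i ∉ picked)))
    ([], List.range (ν.length + 1))).1

/-- Bracket vector of a ν-path. -/
noncomputable def bracketOfPath (ν μ : List Bool) : List ℕ :=
  (List.range (ν.length + 1)).map fun i => ((bracketAssign ν μ).lookup i).getD 0

/-- Componentwise order on (equal length) integer vectors. -/
def listLE (b b' : List ℕ) : Prop :=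
  b.length = b'.length ∧ ∀ i, b.getD i 0 ≤ b'.getD i 0

/-! Reversal -/

def revPath (ν : List Bool) : List Bool := ν.reverse.map fun s => !s

def revTree (ν : List Bool) (T : Set (ℕ × ℕ)) : Set (ℕ × ℕ) :=
  (fun p : ℕ × ℕ => (northSteps ν - p.2, eastSteps ν - p.1)) '' T

/-! Pipe dreams and subword complexes -/

def dOf (ν : List Bool) (p : ℕ × ℕ) : ℕ := p.1 + (northSteps ν - p.2)

def labelPerm (ν : List Bool) (p : ℕ × ℕ) : Equiv.Perm ℕ :=
  Equiv.swap (dOf ν p + 1) (dOf ν p + 2)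

/-- The points of `A_ν` in reading order: rows from bottom to top, each left to right. -/
def readingList (ν : List Bool) : List (ℕ × ℕ) :=
  ((List.range (northSteps ν + 1)).map fun y =>
    ((List.range (eastSteps ν + 1)).filter fun x => decide (heightAt ν x ≤ y)).map
      fun x => (x, y)).flatten

/-- The minimal ν-tree. -/
def TminSet (ν : List Bool) : Set (ℕ × ℕ) :=
  {p | p ∈ APts ν ∧ (p.1 = 0 ∨ ∃ i < ν.length, ν.getD i true = false ∧ p = pointAt ν (i + 1))}

noncomputable def prodOver (ν : List Bool) (C : Set (ℕ × ℕ)) : Equiv.Perm ℕ :=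
  (((readingList ν).filter fun p => decide (p ∈ C)).map (labelPerm ν)).prod

/-- Coxeter length: number of inversions. -/
noncomputable def lenInv (π : Equiv.Perm ℕ) : ℕ :=
  {q : ℕ × ℕ | q.1 < q.2 ∧ π q.2 < π q.1}.ncard

noncomputable def piNu (ν : List Bool) : Equiv.Perm ℕ := prodOver ν (APts ν \ TminSet ν)

def Qword (ν : List Bool) : List (Equiv.Perm ℕ) := (readingList ν).map (labelPerm ν)

noncomputable def prodAt (Q : List (Equiv.Perm ℕ)) (P : Finset ℕ) : Equiv.Perm ℕ :=
  (((List.range Q.length).filter fun i => decide (i ∈ P)).map fun i => Q.getD i 1).prod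

def IsFacet (Q : List (Equiv.Perm ℕ)) (π : Equiv.Perm ℕ) (I : Finset ℕ) : Prop :=
  I ⊆ Finset.range Q.length ∧
    prodAt Q (Finset.range Q.length \ I) = π ∧
    (Finset.range Q.length \ I).card = lenInv π

def IncFlip (Q : List (Equiv.Perm ℕ)) (π : Equiv.Perm ℕ) (I J : Finset ℕ) : Prop :=
  IsFacet Q π I ∧ IsFacet Q π J ∧ ∃ i ∈ I, ∃ j ∈ J, i < j ∧ I.erase i = J.erase j

def FlipLE (Q : List (Equiv.Perm ℕ)) (π : Equiv.Perm ℕ) : Finset ℕ → Finset ℕ → Prop :=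
  Relation.ReflTransGen (IncFlip Q π)

/-- The maximal ν-tree. -/
def TmaxSet (ν : List Bool) : Set (ℕ × ℕ) :=
  {p | (p.1 ≤ eastSteps ν ∧ p.2 = northSteps ν) ∨ ∃ i < ν.length, ν.getD i false = true ∧ p = pointAt ν i}

theorem heightAt_zero (ν : List Bool) : heightAt ν 0 = 0 := by
  cases ν <;> simp [heightAt]

theorem heightAt_le (ν : List Bool) : ∀ x, heightAt ν x ≤ northSteps ν := by
  induction ν with
  | nil => intro x; cases x <;> simp [heightAt]
  | cons s r ih =>
    intro x
    rcases x with _ | x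
    · simp [heightAt]
    · cases s
      · simpa [heightAt, northSteps] using ih x
      · simpa [heightAt, northSteps] using ih (x + 1)

theorem heightAt_mono (ν : List Bool) : ∀ x y, x ≤ y → heightAt ν x ≤ heightAt ν y := by
  induction ν with
  | nil => intro x y _; cases x <;> simp [heightAt]
  | cons s r ih =>
    intro x y h
    rcases x with _ | x
    · simp [heightAt]
    · rcases y with _ | y
      · omega
      · cases s
        · simpa [heightAt] using ih x y (by omega)
        · simpa [heightAt] using ih (x + 1) (y + 1) h

theorem heightAt_east (ν : List Bool) : ∀ i, ν.getD i true = false →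
    heightAt ν ((ν.take i).count false + 1) = (ν.take i).count true := by
  induction ν with
  | nil => intro i h; simp at h
  | cons s r ih =>
    intro i h
    rcases i with _ | i
    · simp at h; subst h; simp [heightAt, heightAt_zero]
    · have := ih i (by simpa using h)
      cases s <;> simpa [heightAt] using this

theorem heightAt_north (ν : List Bool) : ∀ i, ν.getD i false = true →
    (ν.take i).count true < heightAt ν ((ν.take i).count false + 1) := by
  induction ν with
  | nil => intro i h; simp at h
  | cons s r ih =>
    intro i h
    rcases i with _ | i
    · simp at h; subst h; simp [heightAt]
    · have := ih i (by simpa using h)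
      cases s <;> simpa [heightAt] using this

theorem initial_north (ν : List Bool) : ∀ j, j < (ν.takeWhile (fun s => s)).length →
    j < heightAt ν 1 ∧ j < northSteps ν := by
  induction ν with
  | nil => intro j h; simp at h
  | cons s r ih =>
    intro j h
    cases s
    · simp at h
    · rcases j with _ | j
      · simp [heightAt, northSteps]
      · have := ih j (by simpa using h)
        simpa [heightAt, northSteps] using this

theorem heightAt_append_east (ν : List Bool) : ∀ x,
    heightAt (ν ++ [false]) x = heightAt ν x := by
  induction ν with
  | nil => intro x; rcases x with _ | x <;> simp [heightAt]; cases x <;> simp [heightAt]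
  | cons s r ih =>
    intro x
    rcases x with _ | x
    · simp [heightAt]
    · cases s
      · simpa [heightAt] using ih x
      · simpa [heightAt] using ih (x + 1)

theorem heightAt_beyond (ν : List Bool) : ∀ x, ν.count false < x →
    heightAt ν x = ν.count true := by
  induction ν with
  | nil => intro x _; cases x <;> simp [heightAt]
  | cons s r ih =>
    intro x h
    rcases x with _ | x
    · omega
    · cases s
      · simpa [heightAt] using ih x (by simpa using h)
      · simpa [heightAt] using ih (x + 1) (by simpa using h)

theorem final_east (L : List Bool) : ∀ j, j < (L.takeWhile (fun s => !s)).length →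
    j < L.count false ∧ heightAt L.reverse (L.count false - j) = L.count true := by
  induction L with
  | nil => intro j h; simp at h
  | cons s r ih =>
    intro j h
    cases s
    · rcases j with _ | j
      · have := heightAt_beyond r.reverse (r.count false + 1) (by simp)
        simpa [heightAt_append_east] using this
      · have := ih j (by simpa using h)
        simpa [heightAt_append_east] using this
    · simp at h

theorem mem_of_compat {ν : List Bool} {T : Set (ℕ × ℕ)} (hT : IsNuTree ν T) {p : ℕ × ℕ}
    (hp : p ∈ APts ν)
    (h1 : ∀ q ∈ T, p.1 < q.1 → p.2 < q.2 → (q.1, p.2) ∈ APts ν → False)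
    (h2 : ∀ q ∈ T, q.1 < p.1 → q.2 < p.2 → (p.1, q.2) ∈ APts ν → False) : p ∈ T := by
  obtain ⟨hA, hP, hM⟩ := hT
  have := hM (insert p T) (Set.insert_subset hp hA) ?_ (Set.subset_insert _ _)
  · rw [← this]; exact Set.mem_insert _ _
  · refine hP.insert ?_
    intro q hq _
    constructor
    · rintro (⟨a, b, c⟩ | ⟨a, b, c⟩)
      · exact h1 q hq a b c
      · exact h2 q hq a b c
    · rintro (⟨a, b, c⟩ | ⟨a, b, c⟩)
      · exact h2 q hq a b c
      · exact h1 q hq a b c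

theorem no_incompat {ν : List Bool} {T : Set (ℕ × ℕ)} (hT : IsNuTree ν T) {p q : ℕ × ℕ}
    (hp : p ∈ T) (hq : q ∈ T) (h1 : p.1 < q.1) (h2 : p.2 < q.2)
    (h3 : (q.1, p.2) ∈ APts ν) : False := by
  refine hT.2.1 hp hq ?_ (Or.inl ⟨h1, h2, h3⟩)
  rintro rfl
  omega

theorem root_mem {ν : List Bool} {T : Set (ℕ × ℕ)} (hT : IsNuTree ν T) :
    (0, northSteps ν) ∈ T := by
  apply mem_of_compat hT
  · exact ⟨Nat.zero_le _, heightAt_le _ _, le_rfl⟩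
  · intro q hq _ h _
    have := (hT.1 hq).2.2
    simp only at h
    omega
  · intro q hq h
    simp at h

theorem corner_mem {ν : List Bool} {T : Set (ℕ × ℕ)} (hT : IsNuTree ν T) {a b : ℕ}
    (ha : a ≤ eastSteps ν) (hb : b ≤ northSteps ν) (hab : heightAt ν a ≤ b)
    (h1 : b = northSteps ν ∨ b < heightAt ν (a + 1))
    (h2 : a = 0 ∨ heightAt ν a = b) : (a, b) ∈ T := by
  apply mem_of_compat hT
  · exact ⟨ha, hab, hb⟩
  · rintro ⟨c, d⟩ hq h3 h4 ⟨_, h6, _⟩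
    have h5 := (hT.1 hq).2.2
    have h7 := heightAt_mono ν (a + 1) c h3
    simp only at h3 h4 h5 h6 h7
    omega
  · rintro ⟨c, d⟩ hq h3 h4 ⟨_, h6, _⟩
    simp only at h3 h4 h6
    omega

theorem column_step {ν : List Bool} {T : Set (ℕ × ℕ)} (hT : IsNuTree ν T) {x y : ℕ}
    (hxy : (x, y) ∈ APts ν) (hx : 0 < x)
    (h : ∀ q ∈ T, q.1 < x → q.2 < y → (x, q.2) ∈ APts ν → False) :
    ∃ y1, y ≤ y1 ∧ (x, y1) ∈ T ∧ ∃ a, a < x ∧ (a, y1) ∈ T := by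
  have hex : ∃ y1, y ≤ y1 ∧ ∃ a, a < x ∧ (a, y1) ∈ T :=
    ⟨northSteps ν, hxy.2.2, 0, hx, root_mem hT⟩
  obtain ⟨h1, a, ha, haT⟩ := Nat.find_spec hex
  have hmin := fun z => @Nat.find_min _ _ hex z
  generalize Nat.find hex = y1 at *
  refine ⟨y1, h1, ?_, a, ha, haT⟩
  have hA : (x, y1) ∈ APts ν := ⟨hxy.1, le_trans hxy.2.1 h1, (hT.1 haT).2.2⟩
  apply mem_of_compat hT hA
  · intro q hq h2 h3 h4
    exact no_incompat hT haT hq (lt_trans ha h2) h3 h4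
  · rintro ⟨c, d⟩ hq h2 h3 h4
    by_cases hd : d < y
    · exact h _ hq h2 hd h4
    · exact hmin d h3 ⟨by omega, c, h2, hq⟩

theorem row_step {ν : List Bool} {T : Set (ℕ × ℕ)} (hT : IsNuTree ν T) {y : ℕ}
    (hy : y < northSteps ν) : ∃ x, (x, y) ∈ T := by
  have hex : ∃ k, ∃ x, x + k = eastSteps ν ∧ heightAt ν x ≤ y ∧ ∃ b, y < b ∧ (x, b) ∈ T :=
    ⟨eastSteps ν, 0, by simp, by simp [heightAt_zero], northSteps ν, hy, root_mem hT⟩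
  obtain ⟨x, h1, h2, b, hb, hbT⟩ := Nat.find_spec hex
  have hmin := fun z => @Nat.find_min _ _ hex z
  generalize Nat.find hex = k at *
  refine ⟨x, ?_⟩
  apply mem_of_compat hT ⟨by simp only; omega, h2, hy.le⟩
  · rintro ⟨c, d⟩ hq h3 h4 ⟨h5, h6, _⟩
    simp only at h3 h4 h5 h6
    exact hmin (eastSteps ν - c) (by omega) ⟨c, by omega, h6, d, h4, hq⟩
  · intro q hq h3 h4 h5
    exact no_incompat hT hq hbT h3 (lt_trans h4 hb) h5

theorem nuTree_structural_properties (ν : List Bool) (T : Set (ℕ × ℕ))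
    (hT : IsNuTree ν T) :
    (0, northSteps ν) ∈ T ∧
    (∀ i, 0 < i → i < ν.length → ν.getD (i - 1) true = false → ν.getD i false = true →
      pointAt ν i ∈ T) ∧
    (∀ j, j < (ν.takeWhile (fun s => s)).length → (0, j) ∈ T) ∧
    (∀ j, j < (ν.reverse.takeWhile (fun s => !s)).length →
      (eastSteps ν - j, northSteps ν) ∈ T) ∧
    (∀ x ≤ eastSteps ν, ∃ y, (x, y) ∈ T) ∧
    (∀ y ≤ northSteps ν, ∃ x, (x, y) ∈ T) ∧
    (∀ p ∈ T, p ≠ (0, northSteps ν) →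
      Xor' (∃ b, p.2 < b ∧ (p.1, b) ∈ T) (∃ a, a < p.1 ∧ (a, p.2) ∈ T)) := by
  refine ⟨root_mem hT, ?_, ?_, ?_, ?_, ?_, ?_⟩
  · intro i hi _ h1 h2
    obtain ⟨k, rfl⟩ : ∃ k, i = k + 1 := ⟨i - 1, by omega⟩
    rw [Nat.add_sub_cancel] at h1
    have hk : k < ν.length := by omega
    have hget : ν[k] = false := by simpa [List.getD, hk] using h1
    have h3 := heightAt_east ν k h1
    have h4 := heightAt_north ν (k + 1) h2
    have e1 : (ν.take (k + 1)).count false = (ν.take k).count false + 1 := by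
      rw [List.take_succ_eq_append_getElem hk, hget]; simp
    have e2 : (ν.take (k + 1)).count true = (ν.take k).count true := by
      rw [List.take_succ_eq_append_getElem hk, hget]; simp
    have h5 : heightAt ν ((ν.take (k + 1)).count false) = (ν.take (k + 1)).count true := by
      rw [e1, e2, h3]
    exact corner_mem hT ((List.take_sublist _ _).count_le _)
      ((List.take_sublist _ _).count_le _) h5.le (Or.inr h4) (Or.inr h5)
  · intro j hj
    obtain ⟨h1, h2⟩ := initial_north ν j hj
    exact corner_mem hT (Nat.zero_le _) h2.le (by simp [heightAt_zero]) (Or.inr h1) (Or.inl rfl)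
  · intro j hj
    have h := (final_east ν.reverse j hj).2
    rw [List.reverse_reverse, List.count_reverse, List.count_reverse] at h
    exact corner_mem hT (Nat.sub_le _ _) le_rfl (heightAt_le _ _) (Or.inl rfl) (Or.inr h)
  · intro x hx
    rcases Nat.eq_zero_or_pos x with rfl | h0
    · exact ⟨_, root_mem hT⟩
    · obtain ⟨y, _, hy, _⟩ := column_step hT (x := x) (y := heightAt ν x)
        ⟨hx, le_rfl, heightAt_le _ _⟩ h0 (fun q _ _ h1 h2 => absurd h2.2.1 (not_le.mpr h1))
      exact ⟨y, hy⟩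
  · intro y hy
    rcases hy.eq_or_lt with rfl | h
    · exact ⟨_, root_mem hT⟩
    · exact row_step hT h
  · rintro ⟨x, y⟩ hp hne
    have hnot : ¬ ((∃ b, y < b ∧ (x, b) ∈ T) ∧ (∃ a, a < x ∧ (a, y) ∈ T)) := by
      rintro ⟨⟨b, hb, hbT⟩, a, ha, haT⟩
      exact no_incompat hT haT hbT ha hb (hT.1 hp)
    have hor : (∃ b, y < b ∧ (x, b) ∈ T) ∨ (∃ a, a < x ∧ (a, y) ∈ T) := by
      rcases Nat.eq_zero_or_pos x with rfl | h0
      · left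
        refine ⟨_, lt_of_le_of_ne (hT.1 hp).2.2 ?_, root_mem hT⟩
        rintro h
        exact hne (by rw [h])
      · obtain ⟨y1, h1, h2, a, ha, haT⟩ := column_step hT (hT.1 hp) h0
          (fun q hq a b c => no_incompat hT hq hp a b c)
        rcases h1.eq_or_lt with rfl | h
        · exact Or.inr ⟨a, ha, haT⟩
        · exact Or.inl ⟨y1, h, h2⟩
    rcases hor with h | h
    · exact Or.inl ⟨h, fun hc => hnot ⟨h, hc⟩⟩
    · exact Or.inr ⟨h, fun hc => hnot ⟨hc, h⟩⟩
end

section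
/- Let ν be a lattice path. If T is a ν-tree and T' is obtained from T by a right rotation, then T' is also a ν-tree (its points are pairwise ν-compatible and it is maximal with this property). -/
open scoped Classical

theorem heightAt_mono_aux (ν : List Bool) : ∀ x x' : ℕ, x ≤ x' → x' ≤ eastSteps ν →
    heightAt ν x ≤ heightAt ν x' := by
  induction ν with
  | nil =>
    intro x x' h h'
    simp [eastSteps] at h'
    subst h'
    obtain rfl : x = 0 := by omega
    exact le_refl _
  | cons s rest ih =>
    intro x x' h h'
    cases x with
    | zero => simp [heightAt]
    | succ x =>
      cases x' with
      | zero => omega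
      | succ x' =>
        cases s with
        | true =>
          have := ih (x + 1) (x' + 1) h (by simpa [eastSteps] using h')
          simpa [heightAt] using this
        | false =>
          have := ih x x' (by omega) (by simpa [eastSteps] using h')
          simpa [heightAt] using this

theorem APts_left {ν : List Bool} {a c b : ℕ} (h : (c, b) ∈ APts ν) (hac : a ≤ c) :
    (a, b) ∈ APts ν := by
  obtain ⟨h1, h2, h3⟩ := h
  exact ⟨le_trans hac h1, le_trans (heightAt_mono_aux ν a c hac h1) h2, h3⟩

theorem APts_up {ν : List Bool} {a a' b b' d : ℕ} (h : (a, b) ∈ APts ν) (hbd : b ≤ d)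
    (h' : (a', b') ∈ APts ν) (hd : d ≤ b') : (a, d) ∈ APts ν :=
  ⟨h.1, le_trans h.2.1 hbd, le_trans hd h'.2.2⟩

/-- Compatibility as an explicit implication. -/
theorem compat_elim {ν : List Bool} {S : Set (ℕ × ℕ)} (hS : S.Pairwise (Compatible ν))
    {a b c d : ℕ} (h1 : (a, b) ∈ S) (h2 : (c, d) ∈ S) (hac : a < c) (hbd : b < d)
    (hA : (c, b) ∈ APts ν) : False := by
  refine hS h1 h2 ?_ (Or.inl ⟨hac, hbd, hA⟩)
  intro h
  simp only [Prod.mk.injEq] at h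
  omega

theorem compat_symm {ν : List Bool} {p q : ℕ × ℕ} (h : Compatible ν p q) :
    Compatible ν q p := fun h' => h (Or.symm h')

theorem exists_incompat {ν : List Bool} {T : Set (ℕ × ℕ)} (hT : IsNuTree ν T) {s : ℕ × ℕ}
    (hs : s ∈ APts ν) (hsT : s ∉ T) : ∃ t ∈ T, Incompatible ν s t := by
  by_contra hcon
  push Not at hcon
  have hI : insert s T = T := by
    refine hT.2.2 _ (Set.insert_subset hs hT.1) ?_ (Set.subset_insert _ _)
    refine (Set.pairwise_insert).2 ⟨hT.2.1, fun b hb _ => ⟨hcon b hb, compat_symm (hcon b hb)⟩⟩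
  exact hsT (hI ▸ Set.mem_insert s T)

theorem rotation_of_nuTree_is_nuTree (ν : List Bool) (T T' : Set (ℕ × ℕ))
    (hT : IsNuTree ν T) (hrot : IsRightRotation T T') :
    IsNuTree ν T' := by
  obtain ⟨_, _, x, y, X, Y, rfl, rfl, hxX, hyY, hq, hp, hr, hv, hh, -, -, rfl⟩ := hrot
  have hA := hT.1
  have hC := hT.2.1
  have hq'A : (X, Y) ∈ APts ν := APts_up (hA hr) hyY.le (hA hp) le_rfl
  refine ⟨?_, ?_, ?_⟩
  · rintro t (ht | ht)
    · exact hA ht.1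
    · rw [Set.mem_singleton_iff] at ht
      exact ht ▸ hq'A
  · have key : ∀ t ∈ T, t ≠ (x, y) → Compatible ν t (X, Y) := by
      rintro ⟨a, b⟩ ht hne (⟨h1, h2, h3⟩ | ⟨h1, h2, h3⟩)
      · dsimp only at h1 h2 h3
        have ha : x ≤ a := by
          by_contra hlt
          exact compat_elim hC ht hp (by omega) h2 (APts_left h3 hxX.le)
        have hb : y ≤ b := by
          by_contra hlt
          exact compat_elim hC ht hr h1 (by omega) h3
        rcases ha.eq_or_lt with rfl | ha
        · rcases hb.eq_or_lt with rfl | hb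
          · exact hne rfl
          · exact hv b hb h2 ht
        · rcases hb.eq_or_lt with rfl | hb
          · exact hh a ha h1 ht
          · exact compat_elim hC hq ht ha hb (APts_left (hA hr) h1.le)
      · dsimp only at h1 h2 h3
        exact compat_elim hC hp ht (hxX.trans h1) h2 h3
    rw [Set.union_singleton]
    refine (Set.pairwise_insert).2 ⟨hC.mono Set.diff_subset, fun t ht _ => ?_⟩
    have := key t ht.1 ht.2
    exact ⟨compat_symm this, this⟩
  · intro S hSA hSC hTS
    refine Set.Subset.antisymm ?_ hTS
    rintro ⟨a, b⟩ hs
    have hq'S : (X, Y) ∈ S := hTS (Or.inr rfl)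
    have hTS' : ∀ t ∈ T, t ≠ (x, y) → t ∈ S := fun t ht hne => hTS (Or.inl ⟨ht, hne⟩)
    have hpS : (x, Y) ∈ S := hTS' _ hp (by simp; omega)
    have hrS : (X, y) ∈ S := hTS' _ hr (by simp; omega)
    by_contra hsT'
    have hsq' : (a, b) ≠ (X, Y) := fun h => hsT' (Or.inr h)
    have hsq : (a, b) ≠ (x, y) := by
      intro h
      rw [h] at hs
      exact compat_elim hSC hs hq'S hxX hyY (hA hr)
    have hsT : (a, b) ∉ T := fun h => hsT' (Or.inl ⟨h, hsq⟩)
    obtain ⟨t, ht, hinc⟩ := exists_incompat hT (hSA hs) hsT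
    have htq : t = (x, y) := by
      by_contra hne
      exact hSC hs (hTS' t ht hne) (fun h => hsT (h ▸ ht)) hinc
    subst htq
    rcases hinc with ⟨h1, h2, h3⟩ | ⟨h1, h2, h3⟩
    · dsimp only at h1 h2 h3
      exact compat_elim hSC hs hpS h1 (h2.trans hyY) h3
    · dsimp only at h1 h2 h3
      have hbY : b ≤ Y := by
        by_contra hlt
        exact compat_elim hSC hpS hs h1 (by omega) (APts_up h3 hyY.le (hA hp) le_rfl)
      have haX : a ≤ X := by
        by_contra hlt
        exact compat_elim hSC hrS hs (by omega) h2 h3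
      rcases haX.eq_or_lt with rfl | haX
      · rcases hbY.eq_or_lt with rfl | hbY
        · exact hsq' rfl
        · have hxb : (x, b) ∈ APts ν := APts_up (hA hq) h2.le (hA hp) hbY.le
          obtain ⟨⟨c, d⟩, ht', hinc'⟩ := exists_incompat hT hxb (hv b h2 hbY)
          rcases hinc' with ⟨g1, g2, g3⟩ | ⟨g1, g2, g3⟩
          · dsimp only at g1 g2 g3
            have hca : a < c := by
              by_contra hlt
              exact compat_elim hC hq ht' g1 (h2.trans g2) (APts_left h3 (by omega))
            exact compat_elim hSC hs (hTS' _ ht' (by simp; omega)) hca g2 g3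
          · dsimp only at g1 g2 g3
            exact compat_elim hC ht' hp g1 (g2.trans hbY) g3
      · rcases hbY.eq_or_lt with rfl | hbY
        · obtain ⟨⟨c, d⟩, ht', hinc'⟩ := exists_incompat hT h3 (hh a h1 haX)
          rcases hinc' with ⟨g1, g2, g3⟩ | ⟨g1, g2, g3⟩
          · dsimp only at g1 g2 g3
            exact compat_elim hC hq ht' (h1.trans g1) g2 g3
          · dsimp only at g1 g2 g3
            exact compat_elim hSC (hTS' _ ht' (by simp; omega)) hs g1 (g2.trans h2) g3
        · exact compat_elim hSC hs hq'S haX hbY (APts_up (hA hr) h2.le (hA hp) hbY.le)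
end
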